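/- Let X be a real Hilbert space and let U and V be nonempty closed affine subspaces of X. Let v be the gap vector of (U, V) and suppose v ∈ U − V. Let T x = x − P_U x + P_V(2•P_U x − x) be the Douglas–Rachford operator of (U, V), and let T' x = x − P_U x + P_{v+V}(2•P_U x − x) be the Douglas–Rachford operator of (U, v + V). Then for every x ∈ X and every n ∈ ℕ, the shadow sequence satisfies P_U(T^[n] x) = P_U(T^[n] x + n•v) = P_U((T_{−v})^[n] x) = P_U(T'^[n] x), where T_{−v} : y ↦ T(y + v). -/

import Mathlib

/-!
The gap vector `v = u - w` is orthogonal to the directions of both `U` and `V`, because moving `u`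
along `U` or `w` along `V` cannot shorten it (`inner_eq_zero_of_forall_norm_le`). A nearest point of
an affine subspace does not change when the argument is moved orthogonally to its direction
(`nearest_eq_of_inner_eq_zero`). Hence `P_U` and `P_V` are invariant under translation by
multiples of `v`, and `P_{v+V} = v + P_V`. It follows that `T (x + t • v) = T x + t • v` and
`T' x = T x + v = T (x + v)`, so that `T'` and `T₋ᵥ` coincide and their `n`-th iterate at `x` is
`T^[n] x + n • v`. Applying `P_U` removes the multiple of `v`.
-/

/-- If the origin is a nearest point to `a` on the line `ℝ d`, then `a` is orthogonal to `d`. -/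
lemma inner_eq_zero_of_forall_norm_le {X : Type*} [NormedAddCommGroup X] [InnerProductSpace ℝ X]
    {a d : X} (h : ∀ t : ℝ, ‖a‖ ≤ ‖a - t • d‖) : inner ℝ a d = 0 := by
  by_cases hd : d = 0
  · simp [hd]
  have hpos : 0 < ‖d‖ ^ 2 := by positivity
  -- The parameter minimising `t ↦ ‖a - t • d‖`.
  set t : ℝ := inner ℝ a d / ‖d‖ ^ 2 with ht
  have h1 : ‖a‖ ^ 2 ≤ ‖a - t • d‖ ^ 2 := pow_le_pow_left₀ (norm_nonneg _) (h t) 2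
  rw [norm_sub_sq_real, inner_smul_right, norm_smul, mul_pow, Real.norm_eq_abs, sq_abs] at h1
  have h2 : inner ℝ a d = t * ‖d‖ ^ 2 := by rw [ht]; field_simp
  rw [h2] at h1 ⊢
  have h3 : t ^ 2 * ‖d‖ ^ 2 ≤ 0 := by nlinarith
  have h4 : t ^ 2 ≤ 0 := nonpos_of_mul_nonpos_left h3 hpos
  have h5 : t = 0 := pow_eq_zero_iff two_ne_zero |>.mp (le_antisymm h4 (sq_nonneg t))
  simp [h5]

lemma inner_sub_nearest_eq_zero {X : Type*} [NormedAddCommGroup X] [InnerProductSpace ℝ X]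
    {C : AffineSubspace ℝ X} {x q : X} (hq : q ∈ C) (hmin : ∀ c ∈ C, ‖x - q‖ ≤ ‖x - c‖)
    {d : X} (hd : d ∈ C.direction) : inner ℝ (x - q) d = 0 := by
  refine inner_eq_zero_of_forall_norm_le fun t => ?_
  have h := hmin _ (AffineSubspace.vadd_mem_of_mem_direction (C.direction.smul_mem t hd) hq)
  rwa [vadd_eq_add, add_comm, ← sub_sub] at h

/-- Points that differ by a vector orthogonal to the direction of `C` have the same nearest point
in `C`. -/
lemma nearest_eq_of_inner_eq_zero {X : Type*} [NormedAddCommGroup X] [InnerProductSpace ℝ X]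
    {C : AffineSubspace ℝ X} {x y p q : X}
    (hp : p ∈ C) (hpmin : ∀ c ∈ C, ‖x - p‖ ≤ ‖x - c‖)
    (hq : q ∈ C) (hqmin : ∀ c ∈ C, ‖y - q‖ ≤ ‖y - c‖)
    (hxy : ∀ d ∈ C.direction, inner ℝ (x - y) d = 0) : p = q := by
  have hd : p - q ∈ C.direction := AffineSubspace.vsub_mem_direction hp hq
  have h : inner ℝ (p - q) (p - q) = 0 := by
    have e : p - q = (x - y) - (x - p) + (y - q) := by abel
    conv_lhs => arg 2; rw [e]
    rw [inner_add_left, inner_sub_left, hxy _ hd, inner_sub_nearest_eq_zero hp hpmin hd,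
      inner_sub_nearest_eq_zero hq hqmin hd]
    simp
  exact sub_eq_zero.mp (inner_self_eq_zero.mp h)


/-- If the gap vector `v` of two nonempty closed affine subspaces `U`, `V` is attained,
then the shadow sequence of the Douglas–Rachford operator `T` of `(U, V)` satisfies
`P_U (T^[n] x) = P_U (T^[n] x + n • v) = P_U ((T₋ᵥ)^[n] x) = P_U (T'^[n] x)`, where
`T₋ᵥ : y ↦ T (y + v)` and `T'` is the Douglas–Rachford operator of `(U, v + V)`. -/
theorem stmt16 {X : Type*} [NormedAddCommGroup X] [InnerProductSpace ℝ X] [CompleteSpace X]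
    (U V : AffineSubspace ℝ X)
    (hUne : (U : Set X).Nonempty) (hUcl : IsClosed (U : Set X))
    (hVne : (V : Set X).Nonempty) (hVcl : IsClosed (V : Set X))
    (v : X)
    (hv_mem : v ∈ closure {p : X | ∃ u ∈ U, ∃ w ∈ V, p = u - w})
    (hv_min : ∀ u ∈ U, ∀ w ∈ V, ‖v‖ ≤ ‖u - w‖)
    (hv_att : ∃ u ∈ U, ∃ w ∈ V, v = u - w)
    (PU : X → X) (hPU_mem : ∀ x : X, PU x ∈ U)
    (hPU_min : ∀ x : X, ∀ u ∈ U, ‖x - PU x‖ ≤ ‖x - u‖)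
    (PV : X → X) (hPV_mem : ∀ x : X, PV x ∈ V)
    (hPV_min : ∀ x : X, ∀ w ∈ V, ‖x - PV x‖ ≤ ‖x - w‖)
    -- `PV'` is the nearest-point projection onto the translate `v + V`:
    (PV' : X → X) (hPV'_mem : ∀ x : X, PV' x - v ∈ V)
    (hPV'_min : ∀ x y : X, y - v ∈ V → ‖x - PV' x‖ ≤ ‖x - y‖)
    (T : X → X) (hT : ∀ x : X, T x = x - PU x + PV ((2 : ℝ) • PU x - x))
    (T' : X → X) (hT' : ∀ x : X, T' x = x - PU x + PV' ((2 : ℝ) • PU x - x)) :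
    ∀ (x : X) (n : ℕ),
      PU (T^[n] x) = PU (T^[n] x + (n : ℝ) • v) ∧
      PU (T^[n] x + (n : ℝ) • v) = PU ((fun y : X => T (y + v))^[n] x) ∧
      PU ((fun y : X => T (y + v))^[n] x) = PU (T'^[n] x) := by
  obtain ⟨u, hu, w, hw, hvuw⟩ := hv_att
  have hvU : ∀ d ∈ U.direction, inner ℝ v d = 0 := fun d hd =>
    inner_eq_zero_of_forall_norm_le fun t => by
      have h := hv_min _ (AffineSubspace.vadd_mem_of_mem_direction
        (U.direction.smul_mem (-t) hd) hu) w hw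
      have e : ((-t) • d +ᵥ u) - w = v - t • d := by rw [vadd_eq_add, hvuw]; module
      rwa [e] at h
  have hvV : ∀ d ∈ V.direction, inner ℝ v d = 0 := fun d hd =>
    inner_eq_zero_of_forall_norm_le fun t => by
      have h := hv_min u hu _ (AffineSubspace.vadd_mem_of_mem_direction
        (V.direction.smul_mem t hd) hw)
      have e : u - (t • d +ᵥ w) = v - t • d := by rw [vadd_eq_add, hvuw]; module
      rwa [e] at h
  have hPU : ∀ (x : X) (t : ℝ), PU (x + t • v) = PU x := fun x t =>
    nearest_eq_of_inner_eq_zero (hPU_mem _) (hPU_min _) (hPU_mem _) (hPU_min _) fun d hd => by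
      rw [add_sub_cancel_left, real_inner_smul_left, hvU d hd, mul_zero]
  have hPV : ∀ (x : X) (t : ℝ), PV (x - t • v) = PV x := fun x t =>
    nearest_eq_of_inner_eq_zero (hPV_mem _) (hPV_min _) (hPV_mem _) (hPV_min _) fun d hd => by
      rw [sub_sub_cancel_left, inner_neg_left, real_inner_smul_left, hvV d hd, mul_zero, neg_zero]
  -- `PV' x - v` is the point of `V` nearest to `x - v`, hence also the one nearest to `x`.
  have hPV' : ∀ x : X, PV' x = PV x + v := fun x => by
    refine sub_eq_iff_eq_add.mp (nearest_eq_of_inner_eq_zero (x := x - v) (hPV'_mem x)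
      (fun c hc => ?_) (hPV_mem x) (hPV_min x) fun d hd => ?_)
    · have h := hPV'_min x (c + v) (by simpa using hc)
      rwa [sub_sub_sub_cancel_right, sub_sub, add_comm v c]
    · rw [sub_sub_cancel_left, inner_neg_left, hvV d hd, neg_zero]
  have hTv : ∀ (x : X) (t : ℝ), T (x + t • v) = T x + t • v := fun x t => by
    rw [hT, hT, hPU, ← sub_sub, hPV]
    abel
  have hTT' : ∀ x : X, T' x = T (x + v) := fun x => by
    have h := hTv x 1
    rw [one_smul] at h
    rw [h, hT', hT, hPV']
    abel
  have hfun : (fun y : X => T (y + v)) = T' := funext fun y => (hTT' y).symm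
  have hiter : ∀ (x : X) (n : ℕ), T'^[n] x = T^[n] x + (n : ℝ) • v := fun x n => by
    induction n with
    | zero => simp
    | succ k ih =>
      have e : T^[k] x + (k : ℝ) • v + v = T^[k] x + ((k + 1 : ℕ) : ℝ) • v := by
        push_cast; module
      rw [Function.iterate_succ_apply', Function.iterate_succ_apply', ih, hTT', e, hTv]
  intro x n
  rw [hfun, hiter]
  exact ⟨(hPU _ _).symm, rfl, rfl⟩
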